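/- Let each f_i : R^d → R be differentiable with L_i-Lipschitz gradient and f = (1/n) Σ_{i=1}^n f_i. Let S be a proper sampling over [n] with probability vector p, let v ∈ R^n satisfy the ESO condition for S, and set b = Σ_i p_i and K = (b/n²) Σ_{i=1}^n v_i L_i²/p_i. Then for any points x, y ∈ R^d, E‖ Σ_{i∈S} (∇f_i(x) − ∇f_i(y))/(n p_i) ‖² − ‖∇f(x) − ∇f(y)‖² ≤ (K/b)·‖x − y‖², where the expectation is over the random set S. -/

import Mathlib

/-!
Put `g i = n⁻¹ • (∇f_i x - ∇f_i y)`. The second moment of `∑ i ∈ S, a i` is the quadratic form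
`∑ i j, P i j * ⟪a i, a j⟫`, so the variance of this sum is the quadratic form of `P - p pᵀ`. The
Schur product theorem extends the ESO condition from scalars to vectors in an inner product space,
so this variance is at most `∑ i, p i * v i * ‖a i‖ ^ 2`. Taking `a i = (p i)⁻¹ • g i` makes
`∑ i ∈ S, a i` an unbiased estimator of `∇F x - ∇F y` and turns the bound into
`∑ i, v i / p i * ‖g i‖ ^ 2`. The Lipschitz estimates apply termwise because `v i ≥ 0`, which can be
read off the diagonal of the ESO condition.
-/

open scoped ComplexConjugate Gradient InnerProductSpace

section Gradient

variable {𝕜 E ι : Type*} [RCLike 𝕜] [NormedAddCommGroup E] [InnerProductSpace 𝕜 E]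
  [CompleteSpace E] {x : E}

lemma hasGradientAt_const_mul (c : 𝕜) {f : E → 𝕜} {f' : E} (hf : HasGradientAt f f' x) :
    HasGradientAt (fun z => c * f z) (conj c • f') x := by
  simpa [hasGradientAt_iff_hasFDerivAt, map_smulₛₗ] using hf.hasFDerivAt.const_mul c

lemma hasGradientAt_sum {s : Finset ι} {f : ι → E → 𝕜} {f' : ι → E}
    (hf : ∀ i ∈ s, HasGradientAt (f i) (f' i) x) :
    HasGradientAt (fun z => ∑ i ∈ s, f i z) (∑ i ∈ s, f' i) x := by
  simpa [hasGradientAt_iff_hasFDerivAt] using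
    HasFDerivAt.fun_sum fun i hi => (hf i hi).hasFDerivAt

lemma gradient_const_mul_sum (c : 𝕜) {s : Finset ι} {f : ι → E → 𝕜}
    (hf : ∀ i ∈ s, DifferentiableAt 𝕜 (f i) x) :
    ∇ (fun z => c * ∑ i ∈ s, f i z) x = conj c • ∑ i ∈ s, ∇ (f i) x :=
  (hasGradientAt_const_mul c (hasGradientAt_sum fun i hi => (hf i hi).hasGradientAt)).gradient

end Gradient

open scoped ComplexOrder in
lemma sum_sum_mul_inner_nonneg_of_posSemidef {𝕜 E ι : Type*} [RCLike 𝕜] [NormedAddCommGroup E]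
    [InnerProductSpace 𝕜 E] [Fintype ι] {M : Matrix ι ι 𝕜} (hM : M.PosSemidef) (a : ι → E) :
    0 ≤ ∑ i, ∑ j, M i j * ⟪a i, a j⟫_𝕜 := by
  have hadamard_gram := hM.hadamard (Matrix.posSemidef_gram 𝕜 a)
  simpa [dotProduct, Matrix.mulVec, Matrix.gram_apply] using
    hadamard_gram.dotProduct_mulVec_nonneg fun _ => 1

lemma real_norm_sum_sq {E ι : Type*} [NormedAddCommGroup E] [InnerProductSpace ℝ E]
    (s : Finset ι) (a : ι → E) : ‖∑ i ∈ s, a i‖ ^ 2 = ∑ i ∈ s, ∑ j ∈ s, ⟪a i, a j⟫_ℝ := by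
  rw [← real_inner_self_eq_norm_sq, sum_inner]
  exact Finset.sum_congr rfl fun i _ => inner_sum s a (a i)

section Sampling

variable {ι : Type*} [Fintype ι] [DecidableEq ι]

/-- The probability that `i` belongs to the random set which equals `S` with probability `w S`;
the vector `p` of the sampling. -/
def inclusionProb (w : Finset ι → ℝ) (i : ι) : ℝ :=
  ∑ S with i ∈ S, w S

/-- The probabilities that `i` and `j` both belong to the random set which equals `S` with
probability `w S`; the matrix `P` of the sampling. -/
def inclusionMatrix (w : Finset ι → ℝ) : Matrix ι ι ℝ :=
  .of fun i j => ∑ S with i ∈ S ∧ j ∈ S, w S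

/-- The expected separable overapproximation (ESO) condition `P - p pᵀ ⪯ Diag (p i * v i)` on the
parameters `v` of the sampling with weights `w`, the Loewner order being spelled out as positive
semidefiniteness of the difference. -/
def SatisfiesESO (w : Finset ι → ℝ) (v : ι → ℝ) : Prop :=
  (Matrix.diagonal (fun i => inclusionProb w i * v i) -
    (inclusionMatrix w - .of fun i j => inclusionProb w i * inclusionProb w j)).PosSemidef

variable {w : Finset ι → ℝ}

lemma inclusionMatrix_apply_self (w : Finset ι → ℝ) (i : ι) :
    inclusionMatrix w i i = inclusionProb w i := by
  simp [inclusionMatrix, inclusionProb]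

lemma inclusionProb_le_one (hw : w ∈ stdSimplex ℝ (Finset ι)) (i : ι) :
    inclusionProb w i ≤ 1 :=
  (Finset.sum_le_univ_sum_of_nonneg hw.1).trans_eq hw.2

section InnerProductSpace

variable {E : Type*} [NormedAddCommGroup E] [InnerProductSpace ℝ E]

lemma sum_mul_norm_sum_sq_eq_sum_inclusionMatrix (w : Finset ι → ℝ) (a : ι → E) :
    ∑ S, w S * ‖∑ i ∈ S, a i‖ ^ 2 = ∑ i, ∑ j, inclusionMatrix w i j * ⟪a i, a j⟫_ℝ := by
  have norm_sq_expand (S : Finset ι) : w S * ‖∑ i ∈ S, a i‖ ^ 2 =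
      ∑ i, ∑ j, (if i ∈ S ∧ j ∈ S then w S else 0) * ⟪a i, a j⟫_ℝ := by
    simp [real_norm_sum_sq, Finset.mul_sum, ite_and, Finset.sum_ite_irrel]
  calc ∑ S, w S * ‖∑ i ∈ S, a i‖ ^ 2
      = ∑ i, ∑ j, ∑ S, (if i ∈ S ∧ j ∈ S then w S else 0) * ⟪a i, a j⟫_ℝ := by
        simp_rw [norm_sq_expand]
        rw [Finset.sum_comm]
        exact Finset.sum_congr rfl fun i _ => Finset.sum_comm
    _ = ∑ i, ∑ j, inclusionMatrix w i j * ⟪a i, a j⟫_ℝ := by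
        simp only [inclusionMatrix, Matrix.of_apply, ← Finset.sum_mul, Finset.sum_filter]

end InnerProductSpace

namespace SatisfiesESO

variable {v : ι → ℝ}

lemma param_nonneg (hESO : SatisfiesESO w v) (hw : w ∈ stdSimplex ℝ (Finset ι)) {i : ι}
    (hi : 0 < inclusionProb w i) : 0 ≤ v i := by
  have diag_nonneg : 0 ≤ inclusionProb w i * (v i - (1 - inclusionProb w i)) := by
    have := Matrix.PosSemidef.diag_nonneg hESO (i := i)
    simp only [Matrix.sub_apply, Matrix.diagonal_apply_eq, Matrix.of_apply,
      inclusionMatrix_apply_self] at this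
    linarith
  linarith [nonneg_of_mul_nonneg_right diag_nonneg hi, inclusionProb_le_one hw i]

variable {E : Type*} [NormedAddCommGroup E] [InnerProductSpace ℝ E]

lemma variance_sum_le (hESO : SatisfiesESO w v) (a : ι → E) :
    ∑ S, w S * ‖∑ i ∈ S, a i‖ ^ 2 - ‖∑ i, inclusionProb w i • a i‖ ^ 2 ≤
      ∑ i, inclusionProb w i * v i * ‖a i‖ ^ 2 := by
  have mean_sq : ‖∑ i, inclusionProb w i • a i‖ ^ 2 =
      ∑ i, ∑ j, inclusionProb w i * inclusionProb w j * ⟪a i, a j⟫_ℝ := by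
    simp_rw [real_norm_sum_sq, real_inner_smul_left, real_inner_smul_right, mul_assoc]
  have form_nonneg := sum_sum_mul_inner_nonneg_of_posSemidef (𝕜 := ℝ) hESO a
  simp only [Matrix.sub_apply, Matrix.of_apply, sub_mul, Finset.sum_sub_distrib,
    Matrix.diagonal_apply, ite_mul, zero_mul, Finset.sum_ite_eq, Finset.mem_univ, if_true,
    real_inner_self_eq_norm_sq] at form_nonneg
  rw [sum_mul_norm_sum_sq_eq_sum_inclusionMatrix, mean_sq]
  linarith

lemma variance_sum_inv_smul_le (hESO : SatisfiesESO w v)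
    (hproper : ∀ i, inclusionProb w i ≠ 0) (g : ι → E) :
    ∑ S, w S * ‖∑ i ∈ S, (inclusionProb w i)⁻¹ • g i‖ ^ 2 - ‖∑ i, g i‖ ^ 2 ≤
      ∑ i, v i / inclusionProb w i * ‖g i‖ ^ 2 := by
  have unbiased : ∑ i, inclusionProb w i • (inclusionProb w i)⁻¹ • g i = ∑ i, g i :=
    Finset.sum_congr rfl fun i _ => smul_inv_smul₀ (hproper i) (g i)
  calc ∑ S, w S * ‖∑ i ∈ S, (inclusionProb w i)⁻¹ • g i‖ ^ 2 - ‖∑ i, g i‖ ^ 2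
      ≤ ∑ i, inclusionProb w i * v i * ‖(inclusionProb w i)⁻¹ • g i‖ ^ 2 :=
        unbiased ▸ hESO.variance_sum_le fun i => (inclusionProb w i)⁻¹ • g i
    _ = ∑ i, v i / inclusionProb w i * ‖g i‖ ^ 2 := by
        refine Finset.sum_congr rfl fun i _ => ?_
        have := hproper i
        rw [norm_smul, mul_pow, norm_inv, inv_pow, Real.norm_eq_abs, sq_abs]
        field_simp

end SatisfiesESO

theorem sarah_gradient_difference_variance_bound_general {E : Type*} [NormedAddCommGroup E]
    [InnerProductSpace ℝ E] [CompleteSpace E] {f : ι → E → ℝ} {L : ι → ℝ} {x y : E}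
    (hfx : ∀ i, DifferentiableAt ℝ (f i) x) (hfy : ∀ i, DifferentiableAt ℝ (f i) y)
    (hlip : ∀ i, ‖∇ (f i) x - ∇ (f i) y‖ ≤ L i * ‖x - y‖)
    {F : E → ℝ} (hF : F = fun z => (Fintype.card ι : ℝ)⁻¹ * ∑ i, f i z)
    (hw : w ∈ stdSimplex ℝ (Finset ι)) (hproper : ∀ i, 0 < inclusionProb w i)
    {v : ι → ℝ} (hESO : SatisfiesESO w v) {b K : ℝ} (hb : b = ∑ i, inclusionProb w i)
    (hK : K = b / (Fintype.card ι : ℝ) ^ 2 * ∑ i, v i * L i ^ 2 / inclusionProb w i) :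
    ∑ S, w S * ‖∑ i ∈ S, ((Fintype.card ι : ℝ) * inclusionProb w i)⁻¹ •
        (∇ (f i) x - ∇ (f i) y)‖ ^ 2 - ‖∇ F x - ∇ F y‖ ^ 2 ≤ K / b * ‖x - y‖ ^ 2 := by
  set m : ℝ := (Fintype.card ι : ℝ)
  let g (i : ι) : E := m⁻¹ • (∇ (f i) x - ∇ (f i) y)
  have gradient_sub : ∇ F x - ∇ F y = ∑ i, g i := by
    rw [hF, gradient_const_mul_sum _ fun i _ => hfx i, gradient_const_mul_sum _ fun i _ => hfy i,
      conj_trivial, ← smul_sub, ← Finset.sum_sub_distrib, Finset.smul_sum]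
  have norm_g_le (i : ι) : ‖g i‖ ≤ m⁻¹ * (L i * ‖x - y‖) := by
    rw [norm_smul, Real.norm_of_nonneg (by positivity)]
    gcongr
    exact hlip i
  have K_div_b : K / b = (∑ i, v i * L i ^ 2 / inclusionProb w i) / m ^ 2 := by
    -- For empty `ι` the divisor `b` is zero.
    cases isEmpty_or_nonempty ι
    · simp [hK]
    · have : b ≠ 0 := hb ▸ (Finset.sum_pos (fun i _ => hproper i) Finset.univ_nonempty).ne'
      rw [hK]
      field_simp
  simp only [mul_inv_rev, mul_smul, gradient_sub]
  calc ∑ S, w S * ‖∑ i ∈ S, (inclusionProb w i)⁻¹ • g i‖ ^ 2 - ‖∑ i, g i‖ ^ 2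
      ≤ ∑ i, v i / inclusionProb w i * ‖g i‖ ^ 2 :=
        hESO.variance_sum_inv_smul_le (fun i => (hproper i).ne') g
    _ ≤ ∑ i, v i / inclusionProb w i * (m⁻¹ * (L i * ‖x - y‖)) ^ 2 := by
        gcongr with i
        · exact div_nonneg (hESO.param_nonneg hw (hproper i)) (hproper i).le
        · exact norm_g_le i
    _ = K / b * ‖x - y‖ ^ 2 := by
        rw [K_div_b, div_mul_eq_mul_div, Finset.sum_mul, Finset.sum_div]
        exact Finset.sum_congr rfl fun i _ => by ring

end Sampling

/-- Variance bound for the SARAH-type gradient difference estimator under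
arbitrary sampling: `E‖Σ_{i∈S} (∇f_i(x) - ∇f_i(y))/(n p_i)‖² - ‖∇f(x) - ∇f(y)‖²
≤ (K/b)‖x - y‖²`. -/
theorem sarah_gradient_difference_variance_bound {n d : ℕ}
    (f : Fin n → EuclideanSpace ℝ (Fin d) → ℝ)
    (L : Fin n → ℝ) (hL : ∀ i, 0 ≤ L i)
    (hdiff : ∀ i, Differentiable ℝ (f i))
    (hlip : ∀ i x y, ‖gradient (f i) x - gradient (f i) y‖ ≤ L i * ‖x - y‖)
    (F : EuclideanSpace ℝ (Fin d) → ℝ)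
    (hF : F = fun y => (n : ℝ)⁻¹ * ∑ i, f i y)
    (w : Finset (Fin n) → ℝ) (hw0 : ∀ S, 0 ≤ w S) (hw1 : ∑ S, w S = 1)
    (p : Fin n → ℝ)
    (hp : ∀ i, p i = ∑ S ∈ Finset.univ.filter (fun S : Finset (Fin n) => i ∈ S), w S)
    (hproper : ∀ i, 0 < p i)
    (P : Matrix (Fin n) (Fin n) ℝ)
    (hP : ∀ i j, P i j =
      ∑ S ∈ Finset.univ.filter (fun S : Finset (Fin n) => i ∈ S ∧ j ∈ S), w S)
    (v : Fin n → ℝ)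
    (hESO : (Matrix.diagonal (fun i => p i * v i) -
      (P - Matrix.of fun i j => p i * p j)).PosSemidef)
    (b K : ℝ) (hb : b = ∑ i, p i)
    (hK : K = b / (n : ℝ) ^ 2 * ∑ i, v i * L i ^ 2 / p i)
    (x y : EuclideanSpace ℝ (Fin d)) :
    (∑ S : Finset (Fin n), w S *
        ‖∑ i ∈ S, ((n : ℝ) * p i)⁻¹ • (gradient (f i) x - gradient (f i) y)‖ ^ 2) -
      ‖gradient F x - gradient F y‖ ^ 2
      ≤ (K / b) * ‖x - y‖ ^ 2 := by
  obtain ⟨rfl, rfl⟩ : p = inclusionProb w ∧ P = inclusionMatrix w := ⟨funext hp, Matrix.ext hP⟩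
  simpa only [Fintype.card_fin] using sarah_gradient_difference_variance_bound_general
    (fun i => hdiff i x) (fun i => hdiff i y) (fun i => hlip i x y) (by simpa using hF) ⟨hw0, hw1⟩
    hproper hESO hb (by simpa using hK)
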